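/- (Abstract instanton subcomplex) Let (H_•, P_•) be a Fredholm Hilbert complex of length n, with harmonic spaces Ĥ^k := ker(P_k) ∩ ker(P*_{k−1}). Suppose K_0, …, K_n are finite-dimensional subspaces with K_k ⊆ dom(P_k) ∩ dom(P*_{k−1}) such that P_k(K_k) ⊆ K_{k+1}, P*_k(K_{k+1}) ⊆ K_k, and Ĥ^k ⊆ K_k for every k. Then (K_•, P_•|_{K_•}) is a complex of finite-dimensional spaces, and for every k the inclusion K_k ↪ H_k induces a linear isomorphism from ker(P_k|_{K_k})/ran(P_{k−1}|_{K_{k−1}}) onto the cohomology H^k = ker(P_k)/ran(P_{k−1}). -/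

import Mathlib

/-!
The proof is finite-dimensional Hodge theory on `K`, combined with the Hodge decomposition
`ker P_k = Ĥ^k ⊕ ran P_{k-1}` on `H`.

* Injectivity (`mem_range_of_invariant`). Let `x = P y` lie in `K`, and subtract from `x` its
  orthogonal projection to `P(K)`. The difference `z` lies in `K ∩ ran P` and is orthogonal to
  `P(K) ∋ P P* z`, so `‖P* z‖² = ⟨z, P P* z⟩ = 0`; writing `z = P w` gives
  `‖z‖² = ⟨P* z, w⟩ = 0`. Hence `x ∈ P(K)`.
* Surjectivity. The range of `P_{k-1}` is the image of a Banach space (the graph of `P_{k-1}`) under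
  a bounded map into `ker P_k`, and by the Fredholm hypothesis has finite codimension there, so it is
  closed (`isClosed_range_of_finite_quotient`, `isClosed_pran`). Orthogonal projection onto it then
  writes a cocycle as a coboundary plus a harmonic element, and the latter lies in `K`
  (`exists_sub_mem_pran`).
-/

open LinearMap Submodule

noncomputable section

variable {H : ℕ → Type}
  [∀ k, NormedAddCommGroup (H k)] [∀ k, InnerProductSpace ℂ (H k)]
  [∀ k, CompleteSpace (H k)]

/-- The kernel of a partially defined operator, as a submodule of the ambient space. -/
def pker {E F : Type} [NormedAddCommGroup E] [InnerProductSpace ℂ E]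
    [NormedAddCommGroup F] [InnerProductSpace ℂ F] (T : E →ₗ.[ℂ] F) : Submodule ℂ E :=
  (LinearMap.ker T.toFun).map T.domain.subtype

/-- The range of a partially defined operator. -/
def pran {E F : Type} [NormedAddCommGroup E] [InnerProductSpace ℂ E]
    [NormedAddCommGroup F] [InnerProductSpace ℂ F] (T : E →ₗ.[ℂ] F) : Submodule ℂ F :=
  LinearMap.range T.toFun

/-- `ran(P_{k−1})`, with the convention `P_{−1} = 0`. -/
def prevRange (P : ∀ k, H k →ₗ.[ℂ] H (k + 1)) : ∀ k, Submodule ℂ (H k)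
  | 0 => ⊥
  | (k + 1) => pran (P k)

/-- `ker(P*_{k−1})`, with the convention `P_{−1} = 0` (so that it is everything in degree 0). -/
def prevKerAdj (P : ∀ k, H k →ₗ.[ℂ] H (k + 1)) : ∀ k, Submodule ℂ (H k)
  | 0 => ⊤
  | (k + 1) => pker ((P k).adjoint)

/-- The harmonic space `Ĥ^k = ker(P_k) ∩ ker(P*_{k−1})`. -/
abbrev harmonicSp (P : ∀ k, H k →ₗ.[ℂ] H (k + 1)) (k : ℕ) : Submodule ℂ (H k) :=
  pker (P k) ⊓ prevKerAdj P k


/-- `dom(P*_{k−1})`, with the convention `P_{−1} = 0` (so that it is everything in degree 0). -/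
def prevAdjDom (P : ∀ k, H k →ₗ.[ℂ] H (k + 1)) : ∀ k, Submodule ℂ (H k)
  | 0 => ⊤
  | (k + 1) => ((P k).adjoint).domain

/-- The map on quotients induced by a linear map respecting the given submodules. -/
noncomputable def inducedQuotMap {M N : Type} [AddCommGroup M] [Module ℂ M]
    [AddCommGroup N] [Module ℂ N] (f : M →ₗ[ℂ] N)
    (pk pr : Submodule ℂ M) (qk qr : Submodule ℂ N)
    (h1 : ∀ x ∈ pk, f x ∈ qk) (h2 : ∀ x ∈ pr, f x ∈ qr) :
    (↥pk ⧸ pr.comap pk.subtype) →ₗ[ℂ] (↥qk ⧸ qr.comap qk.subtype) :=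
  Submodule.mapQ _ _
    (LinearMap.codRestrict qk (f.comp pk.subtype) (fun x => h1 x.1 x.2))
    (by intro x hx; exact h2 x.1 hx)

/-- The restriction of the differential `P_k` to the finite-dimensional subspaces `K_k`. -/
noncomputable def dKmap (P : ∀ k, H k →ₗ.[ℂ] H (k + 1)) (K : ∀ k, Submodule ℂ (H k))
    (hK1 : ∀ k, K k ≤ (P k).domain)
    (hPK : ∀ k, ∀ x, ∀ hx : x ∈ K k, (P k).toFun ⟨x, hK1 k hx⟩ ∈ K (k + 1)) (k : ℕ) :
    ↥(K k) →ₗ[ℂ] ↥(K (k + 1)) :=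
  LinearMap.codRestrict (K (k + 1)) ((P k).toFun ∘ₗ Submodule.inclusion (hK1 k))
    (fun x => hPK k x.1 x.2)

/-- The range of the previous restricted differential (with the convention that it is `⊥` in
degree 0). -/
noncomputable def prevRangeK (P : ∀ k, H k →ₗ.[ℂ] H (k + 1)) (K : ∀ k, Submodule ℂ (H k))
    (hK1 : ∀ k, K k ≤ (P k).domain)
    (hPK : ∀ k, ∀ x, ∀ hx : x ∈ K k, (P k).toFun ⟨x, hK1 k hx⟩ ∈ K (k + 1)) :
    ∀ k, Submodule ℂ ↥(K k)
  | 0 => ⊥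
  | (k + 1) => LinearMap.range (dKmap P K hK1 hPK k)

theorem mem_pker_iff {E F : Type} [NormedAddCommGroup E] [InnerProductSpace ℂ E]
    [NormedAddCommGroup F] [InnerProductSpace ℂ F] {T : E →ₗ.[ℂ] F} {x : E} :
    x ∈ pker T ↔ ∃ h : x ∈ T.domain, T ⟨x, h⟩ = 0 := by
  constructor
  · rintro ⟨y, hy, rfl⟩
    exact ⟨y.2, hy⟩
  · rintro ⟨h, hx⟩
    exact ⟨⟨x, h⟩, hx, rfl⟩

/-- A bounded operator between Banach spaces whose range has finite codimension has closed range: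
if `C` is a finite-dimensional algebraic complement of the range, then `(x, c) ↦ f x + c` is a
topological quotient map, under which the preimage of the range is the closed set `X × {0}`. -/
theorem isClosed_range_of_finite_quotient {X Y : Type} [NormedAddCommGroup X] [NormedSpace ℂ X]
    [CompleteSpace X] [NormedAddCommGroup Y] [NormedSpace ℂ Y] [CompleteSpace Y]
    (f : X →L[ℂ] Y) (R : Submodule ℂ Y) (hR : ∀ y, y ∈ R ↔ ∃ x, f x = y)
    [FiniteDimensional ℂ (Y ⧸ R)] : IsClosed (R : Set Y) := by
  obtain ⟨C, hC⟩ := R.exists_isCompl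
  have : FiniteDimensional ℂ C := (Submodule.quotientEquivOfIsCompl R C hC).finiteDimensional
  have : CompleteSpace C := FiniteDimensional.complete ℂ C
  let g : (X × C) →L[ℂ] Y := f.coprod C.subtypeL
  have hg : ∀ p, g p = f p.1 + p.2 := fun p => by simp [g]
  have hsurj : Function.Surjective g := by
    intro y
    have hy : y ∈ R ⊔ C := by rw [hC.sup_eq_top]; trivial
    obtain ⟨r, hr, c, hc, rfl⟩ := Submodule.mem_sup.1 hy
    obtain ⟨x, rfl⟩ := (hR r).1 hr
    exact ⟨(x, ⟨c, hc⟩), hg _⟩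
  have hquot := g.isQuotientMap hsurj
  rw [← hquot.isCoinducing.isClosed_preimage]
  have hpre : g ⁻¹' (R : Set Y) = {p | p.2 = 0} := by
    ext p
    have hfp : f p.1 ∈ R := (hR _).2 ⟨_, rfl⟩
    simp only [Set.mem_preimage, SetLike.mem_coe, Set.mem_ofPred_eq, hg]
    rw [R.add_mem_iff_right hfp]
    constructor
    · intro h
      exact Subtype.ext (Submodule.disjoint_def.1 hC.disjoint _ h p.2.2)
    · intro h
      simp [h]
  rw [hpre]
  exact isClosed_eq continuous_snd continuous_const

theorem isClosed_pker {E F : Type} [NormedAddCommGroup E] [InnerProductSpace ℂ E]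
    [NormedAddCommGroup F] [InnerProductSpace ℂ F] {T : E →ₗ.[ℂ] F} (hT : T.IsClosed) :
    IsClosed (pker T : Set E) := by
  have : (pker T : Set E) = (fun x : E => (x, (0 : F))) ⁻¹' (T.graph : Set (E × F)) := by
    ext x
    simp only [SetLike.mem_coe, mem_pker_iff, Set.mem_preimage, LinearPMap.mem_graph_iff]
    constructor
    · rintro ⟨h, hx⟩
      exact ⟨⟨x, h⟩, rfl, hx⟩
    · rintro ⟨y, rfl, hy⟩
      exact ⟨y.2, hy⟩
  rw [this]
  exact IsClosed.preimage (by fun_prop) hT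

/-- The range of a closed operator is closed as soon as it has finite codimension in some closed
subspace `Z`. -/
theorem isClosed_pran {E F : Type} [NormedAddCommGroup E] [InnerProductSpace ℂ E] [CompleteSpace E]
    [NormedAddCommGroup F] [InnerProductSpace ℂ F] [CompleteSpace F] {T : E →ₗ.[ℂ] F}
    (hT : T.IsClosed) (Z : Submodule ℂ F) (hZ : IsClosed (Z : Set F)) (hTZ : pran T ≤ Z)
    [FiniteDimensional ℂ (Z ⧸ (pran T).comap Z.subtype)] : IsClosed (pran T : Set F) := by
  have : CompleteSpace Z := hZ.completeSpace_coe
  have : CompleteSpace T.graph := (show IsClosed (T.graph : Set (E × F)) from hT).completeSpace_coe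
  have hmem : ∀ p : T.graph, (p : E × F).2 ∈ Z := by
    rintro ⟨p, hp⟩
    obtain ⟨y, -, hy⟩ := (LinearPMap.mem_graph_iff _).1 hp
    exact hTZ ⟨y, hy⟩
  let f : T.graph →L[ℂ] Z :=
    ((ContinuousLinearMap.snd ℂ E F).comp T.graph.subtypeL).codRestrict Z hmem
  have hcl := isClosed_range_of_finite_quotient f ((pran T).comap Z.subtype) (by
    intro y
    constructor
    · rintro ⟨x, hx⟩
      exact ⟨⟨(x, T x), T.mem_graph x⟩, Subtype.ext hx⟩
    · rintro ⟨⟨p, hp⟩, rfl⟩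
      obtain ⟨y, -, hy⟩ := (LinearPMap.mem_graph_iff _).1 hp
      exact ⟨y, hy⟩)
  have himg : (pran T : Set F) = Subtype.val '' ((pran T).comap Z.subtype : Set Z) := by
    ext y
    constructor
    · intro hy
      exact ⟨⟨y, hTZ hy⟩, hy, rfl⟩
    · rintro ⟨z, hz, rfl⟩
      exact hz
  rw [himg]
  exact hZ.isClosedEmbedding_subtypeVal.isClosedMap _ hcl

/-- Hodge decomposition: if `ran T` is closed, every vector is congruent modulo `ran T` to an
element of `ker T*`. -/
theorem exists_sub_mem_pran {E F : Type} [NormedAddCommGroup E] [InnerProductSpace ℂ E]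
    [CompleteSpace E] [NormedAddCommGroup F] [InnerProductSpace ℂ F] [CompleteSpace F]
    {T : E →ₗ.[ℂ] F} (hd : Dense (T.domain : Set E)) (hT : IsClosed (pran T : Set F)) (x : F) :
    ∃ h ∈ pker T.adjoint, x - h ∈ pran T := by
  have : CompleteSpace (pran T) := hT.completeSpace_coe
  have horth := (pran T).sub_starProjection_mem_orthogonal x
  set h := x - (pran T).starProjection x with hh
  have hzero : ∀ y : T.domain, inner ℂ (0 : E) (y : E) = inner ℂ h (T y) := by
    intro y
    rw [inner_zero_left]
    exact (Submodule.inner_left_of_mem_orthogonal (K := pran T) ⟨y, rfl⟩ horth).symm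
  have hdom := LinearPMap.mem_adjoint_domain_of_exists h ⟨0, hzero⟩
  refine ⟨h, mem_pker_iff.2 ⟨hdom, LinearPMap.adjoint_apply_eq hd ⟨h, hdom⟩ hzero⟩, ?_⟩
  rw [hh, sub_sub_cancel]
  exact Submodule.starProjection_apply_mem _ _

/-- If the finite-dimensional spaces `K` and `L` are exchanged by `T` and `T*`, every element of
`L` in the range of `T` is already the image of an element of `K`. -/
theorem mem_range_of_invariant {E F : Type} [NormedAddCommGroup E] [InnerProductSpace ℂ E]
    [CompleteSpace E] [NormedAddCommGroup F] [InnerProductSpace ℂ F]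
    {T : E →ₗ.[ℂ] F} (hd : Dense (T.domain : Set E)) (K : Submodule ℂ E) (L : Submodule ℂ F)
    [FiniteDimensional ℂ K] (hK : K ≤ T.domain) (hL : L ≤ T.adjoint.domain)
    (hTK : ∀ x, ∀ hx : x ∈ K, T ⟨x, hK hx⟩ ∈ L)
    (hTL : ∀ x, ∀ hx : x ∈ L, T.adjoint ⟨x, hL hx⟩ ∈ K)
    {x : F} (hx : x ∈ L) (hxr : x ∈ pran T) : ∃ y, ∃ hy : y ∈ K, T ⟨y, hK hy⟩ = x := by
  let R : Submodule ℂ F := LinearMap.range (T.toFun ∘ₗ Submodule.inclusion hK)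
  have horth := R.sub_starProjection_mem_orthogonal x
  have hrR : R.starProjection x ∈ R := Submodule.starProjection_apply_mem _ _
  obtain ⟨⟨y, hy⟩, hyr⟩ := hrR
  change T ⟨y, hK hy⟩ = _ at hyr
  rw [← hyr] at horth
  refine ⟨y, hy, ?_⟩
  set z := x - T ⟨y, hK hy⟩ with hz
  have hzL : z ∈ L := L.sub_mem hx (hTK y hy)
  obtain ⟨w, hw⟩ : z ∈ pran T := (pran T).sub_mem hxr ⟨_, rfl⟩
  change T w = z at hw
  have hadj := LinearPMap.adjoint_isFormalAdjoint hd
  have hQ := hTL z hzL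
  have hQ0 : T.adjoint ⟨z, hL hzL⟩ = 0 := by
    have h := hadj ⟨z, hL hzL⟩ ⟨_, hK hQ⟩
    exact inner_self_eq_zero.1
      (h.trans (Submodule.inner_left_of_mem_orthogonal (K := R) ⟨⟨_, hQ⟩, rfl⟩ horth))
  have hz0 : z = 0 := by
    have h := hadj ⟨z, hL hzL⟩ w
    rw [hQ0, inner_zero_left, hw] at h
    exact inner_self_eq_zero.1 h.symm
  exact (sub_eq_zero.1 hz0).symm

/-- Abstract instanton subcomplex: if `(H, P)` is a Fredholm Hilbert complex of
length `n` and `K_k ⊆ dom(P_k) ∩ dom(P*_{k−1})` are finite-dimensional subspaces invariant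
under `P` and `P*` and containing the harmonic spaces, then `(K, P|_K)` is a complex of
finite-dimensional spaces and the inclusions `K_k ↪ H_k` induce isomorphisms
`ker(P_k|_K)/ran(P_{k−1}|_K) ≅ H^k = ker(P_k)/ran(P_{k−1})`. -/
theorem abstract_instanton_subcomplex
    (n : ℕ) (P : ∀ k, H k →ₗ.[ℂ] H (k + 1))
    (hdense : ∀ k, Dense ((P k).domain : Set (H k)))
    (hclosed : ∀ k, (P k).IsClosed)
    (hsub : ∀ k, ∀ x : (P k).domain, ((P k) x) ∈ (P (k + 1)).domain)
    (hcomp : ∀ k, ∀ x : (P k).domain, P (k + 1) ⟨P k x, hsub k x⟩ = 0)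
    (htop : ∀ k, n ≤ k → P k = 0)
    (hFred : ∀ k, FiniteDimensional ℂ
      (↥(pker (P k)) ⧸ (prevRange P k).comap (pker (P k)).subtype))
    (K : ∀ k, Submodule ℂ (H k))
    (hKfd : ∀ k, FiniteDimensional ℂ (K k))
    (hK1 : ∀ k, K k ≤ (P k).domain)
    (hK2 : ∀ k, K k ≤ prevAdjDom P k)
    (hPK : ∀ k, ∀ x, ∀ hx : x ∈ K k, (P k).toFun ⟨x, hK1 k hx⟩ ∈ K (k + 1))
    (hQK : ∀ k, ∀ x, ∀ hx : x ∈ K (k + 1),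
      ((P k).adjoint).toFun ⟨x, hK2 (k + 1) hx⟩ ∈ K k)
    (hHarm : ∀ k, harmonicSp P k ≤ K k) :
    (∀ k, ∀ x : ↥(K k),
      dKmap P K hK1 hPK (k + 1) (dKmap P K hK1 hPK k x) = 0) ∧
    (∀ k ≤ n,
      ∀ (h1 : ∀ x ∈ LinearMap.ker (dKmap P K hK1 hPK k), (K k).subtype x ∈ pker (P k))
        (h2 : ∀ x ∈ prevRangeK P K hK1 hPK k, (K k).subtype x ∈ prevRange P k),
      Function.Bijective
        (inducedQuotMap ((K k).subtype) (LinearMap.ker (dKmap P K hK1 hPK k))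
          (prevRangeK P K hK1 hPK k) (pker (P k)) (prevRange P k) h1 h2)) := by
  have hker : ∀ k (x : K k), x ∈ LinearMap.ker (dKmap P K hK1 hPK k) ↔ (x : H k) ∈ pker (P k) := by
    intro k x
    rw [mem_pker_iff, LinearMap.mem_ker]
    constructor
    · intro h
      exact ⟨hK1 k x.2, congrArg Subtype.val h⟩
    · rintro ⟨_, h⟩
      exact Subtype.ext h
  refine ⟨fun k x => Subtype.ext (hcomp k ⟨x, hK1 k x.2⟩), ?_⟩
  intro k _ h1 h2
  -- Both halves of bijectivity, stated for representatives.
  have hinj : ∀ x : K k, (x : H k) ∈ prevRange P k → x ∈ prevRangeK P K hK1 hPK k := by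
    intro x hx
    cases k with
    | zero => exact Subtype.ext hx
    | succ k =>
      obtain ⟨y, hy, hyx⟩ := mem_range_of_invariant (hdense k) (K k) (K (k + 1)) (hK1 k)
        (hK2 (k + 1)) (hPK k) (hQK k) x.2 hx
      exact ⟨⟨y, hy⟩, Subtype.ext hyx⟩
  have hsurj : ∀ x ∈ pker (P k), ∃ h ∈ K k, h ∈ pker (P k) ∧ x - h ∈ prevRange P k := by
    intro x hx
    cases k with
    | zero => exact ⟨x, hHarm 0 ⟨hx, trivial⟩, hx, by simp⟩
    | succ k =>
      have hle : pran (P k) ≤ pker (P (k + 1)) := by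
        rintro _ ⟨y, rfl⟩
        exact mem_pker_iff.2 ⟨hsub k y, hcomp k y⟩
      have : FiniteDimensional ℂ
          (pker (P (k + 1)) ⧸ (pran (P k)).comap (pker (P (k + 1))).subtype) := hFred (k + 1)
      obtain ⟨h, hh, hxh⟩ := exists_sub_mem_pran (hdense k)
        (isClosed_pran (hclosed k) _ (isClosed_pker (hclosed (k + 1))) hle) x
      have hhk : h ∈ pker (P (k + 1)) := by
        simpa using (pker (P (k + 1))).sub_mem hx (hle hxh)
      exact ⟨h, hHarm (k + 1) ⟨hhk, hh⟩, hhk, hxh⟩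
  constructor
  · rw [injective_iff_map_eq_zero]
    intro q hq
    obtain ⟨x, rfl⟩ := Submodule.Quotient.mk_surjective _ q
    refine (Submodule.Quotient.mk_eq_zero _).2 (hinj x.1 ?_)
    have hq' : (Submodule.Quotient.mk (⟨(x.1 : H k), h1 x.1 x.2⟩ : pker (P k)) :
        pker (P k) ⧸ (prevRange P k).comap (pker (P k)).subtype) = 0 := hq
    rw [Submodule.Quotient.mk_eq_zero] at hq'
    exact hq'
  · intro q
    obtain ⟨x, rfl⟩ := Submodule.Quotient.mk_surjective _ q
    obtain ⟨h, hK, hhk, hxh⟩ := hsurj x.1 x.2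
    refine ⟨Submodule.Quotient.mk ⟨⟨h, hK⟩, (hker k _).2 hhk⟩, Eq.symm ?_⟩
    exact (Submodule.Quotient.eq _).2 hxh
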